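/- Let α : ℕ → ℕ satisfy α(n)/n → 0 and α(n) ≥ 2 for all large n. Write x = x_{n,α}(1) and a = α(n). Then, as n → ∞: (i) h̃'_{n,α}(1) = log(a) + ∫_0^{log x} (exp(a·v) − 1)·e^v/(e^v − 1) dv + O(1); and (ii) there exists a function p : ℕ → [0,∞) with p(n) = O( x^{a} / ( a³·log x ) ) such that h̃'_{n,α}(1) = log(a) + n/a + n/( a²·(x−1) ) + 2n/( a³·(x−1)·log x ) + p(n) + O( n/( a⁴·(log x)²·(x−1) ) ). -/

import Mathlib

section
open Filter Real Asymptotics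


lemma aux_cheb (a : ℕ) (ha : 1 ≤ a) (x : ℝ) (hx : 1 ≤ x) :
    (a : ℝ) * ∑ j ∈ Finset.Icc 1 a, x ^ j ≤ 2 * ∑ j ∈ Finset.Icc 1 a, (j : ℝ) * x ^ j := by
  have h1 : MonovaryOn (fun j : ℕ => (j : ℝ)) (fun j : ℕ => x ^ j) (Finset.Icc 1 a : Finset ℕ) := by
    apply Monovary.monovaryOn
    apply Monotone.monovary
    · exact fun i j h => by exact_mod_cast h
    · exact fun i j h => pow_le_pow_right₀ hx h
  have h2 := h1.sum_mul_sum_le_card_mul_sum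
  have h3 : ∑ j ∈ Finset.Icc 1 a, (j : ℝ) = a * (a + 1) / 2 := by
    clear h1 h2 ha
    induction a with
    | zero => simp
    | succ k ih => rw [Finset.sum_Icc_succ_top (by omega), ih]; push_cast; ring
  rw [h3] at h2
  simp only [Nat.card_Icc, Nat.add_sub_cancel] at h2
  have ha' : (1 : ℝ) ≤ a := by exact_mod_cast ha
  have h4 : 0 ≤ ∑ j ∈ Finset.Icc 1 a, x ^ j := Finset.sum_nonneg fun j _ => by positivity
  have h5 : (a : ℝ) * ((a + 1) * ∑ j ∈ Finset.Icc 1 a, x ^ j) ≤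
      a * (2 * ∑ j ∈ Finset.Icc 1 a, (j : ℝ) * x ^ j) := by linarith
  have h6 := le_of_mul_le_mul_left h5 (by linarith)
  linarith

lemma aux_ratio (a : ℕ) (ha : 1 ≤ a) (x : ℝ) (hx : 1 ≤ x) :
    0 ≤ (∑ j ∈ Finset.Icc 1 a, x ^ j) * (∑ j ∈ Finset.Icc 1 a, (j : ℝ) ^ 2 * x ^ j) /
      (∑ j ∈ Finset.Icc 1 a, (j : ℝ) * x ^ j) ^ 2 ∧
    (∑ j ∈ Finset.Icc 1 a, x ^ j) * (∑ j ∈ Finset.Icc 1 a, (j : ℝ) ^ 2 * x ^ j) /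
      (∑ j ∈ Finset.Icc 1 a, (j : ℝ) * x ^ j) ^ 2 ≤ 2 := by
  have hc := aux_cheb a ha x hx
  have h0 : 0 ≤ ∑ j ∈ Finset.Icc 1 a, x ^ j := Finset.sum_nonneg fun j _ => by positivity
  have h1 : 0 < ∑ j ∈ Finset.Icc 1 a, (j : ℝ) * x ^ j := by
    apply Finset.sum_pos
    · intro j hj
      have : 1 ≤ j := (Finset.mem_Icc.1 hj).1
      have : (1 : ℝ) ≤ j := by exact_mod_cast this
      positivity
    · exact ⟨1, by simp [ha]⟩
  have h2 : 0 ≤ ∑ j ∈ Finset.Icc 1 a, (j : ℝ) ^ 2 * x ^ j :=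
    Finset.sum_nonneg fun j _ => by positivity
  have h3 : ∑ j ∈ Finset.Icc 1 a, (j : ℝ) ^ 2 * x ^ j ≤
      a * ∑ j ∈ Finset.Icc 1 a, (j : ℝ) * x ^ j := by
    rw [Finset.mul_sum]
    apply Finset.sum_le_sum
    intro j hj
    have : (j : ℝ) ≤ a := by exact_mod_cast (Finset.mem_Icc.1 hj).2
    have hp : 0 ≤ (j : ℝ) * x ^ j := by positivity
    nlinarith
  constructor
  · positivity
  · rw [div_le_iff₀ (by positivity)]
    nlinarith [mul_le_mul_of_nonneg_left h3 h0]

lemma aux_deriv (a : ℕ) (ha : 1 ≤ a) (N : ℝ) (hN : 0 < N) (X H : ℝ → ℝ)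
    (hX : ∀ w : ℝ, 0 < w → 0 < X w ∧ ∑ j ∈ Finset.Icc 1 a, X w ^ j = N / w)
    (hH : ∀ w : ℝ, 0 < w →
      H w = w * ∑ j ∈ Finset.Icc 1 a, X w ^ j / j - N * Real.log (X w)
        - 1 / 2 * Real.log (2 * π * w * ∑ j ∈ Finset.Icc 1 a, (j : ℝ) * X w ^ j)) :
    deriv H 1 = ∑ j ∈ Finset.Icc 1 a, X 1 ^ j / j - 1 / 2 * (1 -
      (∑ j ∈ Finset.Icc 1 a, X 1 ^ j) * (∑ j ∈ Finset.Icc 1 a, (j : ℝ) ^ 2 * X 1 ^ j) /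
      (∑ j ∈ Finset.Icc 1 a, (j : ℝ) * X 1 ^ j) ^ 2) := by
  obtain ⟨hx0, hx1⟩ := hX 1 one_pos
  have hkey : ∀ y z : ℝ, 0 ≤ y → y ≤ z → z - y ≤ ∑ j ∈ Finset.Icc 1 a, z ^ j -
      ∑ j ∈ Finset.Icc 1 a, y ^ j := by
    intro y z hy hyz
    rw [← Finset.sum_sub_distrib]
    have := Finset.single_le_sum (f := fun j => z ^ j - y ^ j) (s := Finset.Icc 1 a)
      (fun j _ => sub_nonneg.2 (pow_le_pow_left₀ hy hyz j)) (a := 1) (by simp [ha])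
    simpa using this
  have hkey2 : ∀ y z : ℝ, 0 ≤ y → 0 ≤ z → |z - y| ≤ |∑ j ∈ Finset.Icc 1 a, z ^ j -
      ∑ j ∈ Finset.Icc 1 a, y ^ j| := by
    intro y z hy hz
    rcases le_total y z with h | h
    · rw [abs_of_nonneg (by linarith)]
      exact (hkey y z hy h).trans (le_abs_self _)
    · rw [abs_sub_comm, abs_of_nonneg (by linarith), abs_sub_comm]
      exact (hkey z y hz h).trans (le_abs_self _)
  have hcont : ContinuousAt X 1 := by
    rw [ContinuousAt, tendsto_iff_norm_sub_tendsto_zero]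
    have hl : Tendsto (fun w : ℝ => |N / w - N / 1|) (nhds 1) (nhds 0) := by
      have : ContinuousAt (fun w : ℝ => |N / w - N / 1|) 1 := by
        apply ContinuousAt.abs
        apply ContinuousAt.sub _ continuousAt_const
        exact continuousAt_const.div continuousAt_id one_ne_zero
      simpa [ContinuousAt] using this
    refine squeeze_zero' (Eventually.of_forall fun _ => norm_nonneg _) ?_ hl
    filter_upwards [lt_mem_nhds (zero_lt_one' ℝ)] with w hw
    rw [Real.norm_eq_abs, ← hx1, ← (hX w hw).2]
    exact hkey2 _ _ hx0.le (hX w hw).1.le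
  set x := X 1 with hxdef
  have hS1pos : 0 < ∑ j ∈ Finset.Icc 1 a, (j : ℝ) * x ^ j := by
    apply Finset.sum_pos
    · intro j hj
      have : 1 ≤ j := (Finset.mem_Icc.1 hj).1
      have : (1 : ℝ) ≤ j := by exact_mod_cast this
      positivity
    · exact ⟨1, by simp [ha]⟩
  have hpw : ∀ j : ℕ, 1 ≤ j → x ^ (j - 1) = x ^ j / x := by
    intro j hj
    obtain ⟨k, rfl⟩ : ∃ k, j = k + 1 := ⟨j - 1, by omega⟩
    rw [Nat.add_sub_cancel, pow_succ]; field_simp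
  have hphi : HasDerivAt (fun y : ℝ => ∑ j ∈ Finset.Icc 1 a, y ^ j)
      ((∑ j ∈ Finset.Icc 1 a, (j : ℝ) * x ^ j) / x) x := by
    have : HasDerivAt (fun y : ℝ => ∑ j ∈ Finset.Icc 1 a, y ^ j)
        (∑ j ∈ Finset.Icc 1 a, (j : ℝ) * x ^ (j - 1)) x :=
      HasDerivAt.fun_sum fun j _ => hasDerivAt_pow j x
    convert this using 1
    rw [Finset.sum_div]
    refine Finset.sum_congr rfl fun j hj => ?_
    rw [hpw j (Finset.mem_Icc.1 hj).1]; ring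
  have hphi1 : HasDerivAt (fun y : ℝ => ∑ j ∈ Finset.Icc 1 a, (j : ℝ) * y ^ j)
      ((∑ j ∈ Finset.Icc 1 a, (j : ℝ) ^ 2 * x ^ j) / x) x := by
    have : HasDerivAt (fun y : ℝ => ∑ j ∈ Finset.Icc 1 a, (j : ℝ) * y ^ j)
        (∑ j ∈ Finset.Icc 1 a, (j : ℝ) * ((j : ℝ) * x ^ (j - 1))) x :=
      HasDerivAt.fun_sum fun j _ => (hasDerivAt_pow j x).const_mul _
    convert this using 1
    rw [Finset.sum_div]
    refine Finset.sum_congr rfl fun j hj => ?_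
    rw [hpw j (Finset.mem_Icc.1 hj).1]; ring
  have hphim : HasDerivAt (fun y : ℝ => ∑ j ∈ Finset.Icc 1 a, y ^ j / j)
      ((∑ j ∈ Finset.Icc 1 a, x ^ j) / x) x := by
    have : HasDerivAt (fun y : ℝ => ∑ j ∈ Finset.Icc 1 a, y ^ j / j)
        (∑ j ∈ Finset.Icc 1 a, ((j : ℝ) * x ^ (j - 1)) / j) x :=
      HasDerivAt.fun_sum fun j _ => (hasDerivAt_pow j x).div_const _
    convert this using 1
    rw [Finset.sum_div]
    refine Finset.sum_congr rfl fun j hj => ?_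
    have h1 := (Finset.mem_Icc.1 hj).1
    have : (j : ℝ) ≠ 0 := by positivity
    rw [hpw j h1]; field_simp
  rw [div_one] at hx1
  have hX' : HasDerivAt X (-(N * x / ∑ j ∈ Finset.Icc 1 a, (j : ℝ) * x ^ j)) 1 := by
    have hf := (hasDerivAt_const x N).fun_div hphi (by rw [hx1]; exact hN.ne')
    have := HasDerivAt.of_local_left_inverse hcont hf ?_ ?_
    · refine this.congr_deriv ?_
      rw [hx1]
      generalize (∑ j ∈ Finset.Icc 1 a, (j : ℝ) * x ^ j) = S at hS1pos
      have hS0 : S * S⁻¹ = 1 := mul_inv_cancel₀ hS1pos.ne'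
      field_simp
      ring_nf
      rw [hS0]
    · rw [hx1]
      have : N * ((∑ j ∈ Finset.Icc 1 a, (j : ℝ) * x ^ j) / x) ≠ 0 := by positivity
      simp only [zero_mul, zero_sub, neg_div]
      apply neg_ne_zero.2
      positivity
    · filter_upwards [lt_mem_nhds (zero_lt_one' ℝ)] with w hw
      rw [(hX w hw).2]; field_simp
  have e1 := (hasDerivAt_id (1 : ℝ)).fun_mul (HasDerivAt.comp (1 : ℝ) hphim hX')
  have e2 := (hX'.log hx0.ne').const_mul N
  have e3 := (((((hasDerivAt_id (1 : ℝ)).const_mul (2 * π)).fun_mul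
    (HasDerivAt.comp (1 : ℝ) hphi1 hX')).log (by
      simp only [Function.comp, id]; rw [← hxdef]; have := Real.pi_pos; positivity))).const_mul (1/2)
  have e4 := (e1.fun_sub e2).fun_sub e3
  have e5 : HasDerivAt H _ 1 := e4.congr_of_eventuallyEq (by
    filter_upwards [lt_mem_nhds (zero_lt_one' ℝ)] with w hw
    rw [hH w hw]; rfl)
  rw [e5.deriv]
  simp only [Function.comp, id, ← hxdef]
  rw [hx1]
  have := Real.pi_pos
  field_simp
  ring


lemma aux_exp_lower (v : ℝ) (hv : 0 ≤ v) : v / 2 * exp (v / 4) ^ 3 ≤ exp v - 1 := by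
  have h1 : v / 4 ≤ Real.sinh (v / 4) := Real.self_le_sinh_iff.2 (by linarith)
  rw [Real.sinh_eq, Real.exp_neg] at h1
  have h2 : exp v = exp (v / 4) ^ 4 := by
    rw [← Real.exp_nat_mul]; congr 1; push_cast; ring
  have ht : 1 ≤ exp (v / 4) := Real.one_le_exp (by linarith)
  rw [h2]
  set t := exp (v / 4)
  have h3 : v / 2 ≤ t - t⁻¹ := by linarith
  have h4 : v / 2 * t ^ 3 ≤ (t - t⁻¹) * t ^ 3 := mul_le_mul_of_nonneg_right h3 (by positivity)
  have h5 : (t - t⁻¹) * t ^ 3 = t ^ 4 - t ^ 2 := by field_simp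
  nlinarith

lemma aux_exp_half (v : ℝ) (hv : 0 ≤ v) : v ^ 2 * exp v ≤ (exp v - 1) ^ 2 := by
  have h1 : v / 2 ≤ Real.sinh (v / 2) := Real.self_le_sinh_iff.2 (by linarith)
  rw [Real.sinh_eq, Real.exp_neg] at h1
  have h2 : exp v = exp (v / 2) ^ 2 := by
    rw [← Real.exp_nat_mul]; congr 1; push_cast; ring
  have ht : 1 ≤ exp (v / 2) := Real.one_le_exp (by linarith)
  rw [h2]
  set t := exp (v / 2)
  have h3 : v ≤ t - t⁻¹ := by linarith
  have h4 : v * t ≤ (t - t⁻¹) * t := mul_le_mul_of_nonneg_right h3 (by positivity)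
  have h5 : (t - t⁻¹) * t = t ^ 2 - 1 := by field_simp
  rw [h5] at h4
  calc v ^ 2 * t ^ 2 = (v * t) ^ 2 := by ring
    _ ≤ _ := pow_le_pow_left₀ (by positivity) h4 2

lemma aux_B (v : ℝ) (hv : 0 < v) :
    exp v / (exp v - 1) ≤ 1 + 1 / v ∧ exp v / (exp v - 1) ^ 2 ≤ 4 / v ^ 2 ∧
    exp v * (exp v + 1) / (exp v - 1) ^ 3 ≤ 16 / v ^ 3 ∧
    exp v * (exp v ^ 2 + 4 * exp v + 1) / (exp v - 1) ^ 4 ≤ 96 / v ^ 4 := by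
  have h0 := Real.add_one_le_exp v
  have h1 := aux_exp_lower v hv.le
  have h2 : exp v = exp (v / 4) ^ 4 := by
    rw [← Real.exp_nat_mul]; congr 1; push_cast; ring
  have ht : 1 ≤ exp (v / 4) := Real.one_le_exp (by linarith)
  have hs : 0 < exp v - 1 := by linarith
  have hs1 : 1 ≤ exp v := by linarith
  have hp : ∀ k : ℕ, (v / 2 * exp (v / 4) ^ 3) ^ k ≤ (exp v - 1) ^ k := fun k =>
    pow_le_pow_left₀ (by positivity) h1 k
  refine ⟨?_, ?_, ?_, ?_⟩
  · rw [div_le_iff₀ hs]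
    have : (1 + 1 / v) * (exp v - 1) = exp v - 1 + (exp v - 1) / v := by ring
    rw [this]
    have : 1 ≤ (exp v - 1) / v := by rw [le_div_iff₀ hv]; linarith
    linarith
  · rw [div_le_div_iff₀ (by positivity) (by positivity)]
    have := hp 2
    have h3 : exp v ≤ exp (v / 4) ^ 6 := by
      rw [h2]; exact pow_le_pow_right₀ ht (by norm_num)
    calc exp v * v ^ 2 ≤ exp (v / 4) ^ 6 * v ^ 2 := by gcongr
      _ = 4 * (v / 2 * exp (v / 4) ^ 3) ^ 2 := by ring
      _ ≤ _ := by gcongr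
  · rw [div_le_div_iff₀ (by positivity) (by positivity)]
    have h3 : exp v ^ 2 ≤ exp (v / 4) ^ 9 := by
      rw [h2, ← pow_mul]; exact pow_le_pow_right₀ ht (by norm_num)
    have h4 : exp v * (exp v + 1) ≤ 2 * exp v ^ 2 := by nlinarith
    calc exp v * (exp v + 1) * v ^ 3 ≤ 2 * exp v ^ 2 * v ^ 3 := by gcongr
      _ ≤ 2 * exp (v / 4) ^ 9 * v ^ 3 := by gcongr
      _ = 16 * (v / 2 * exp (v / 4) ^ 3) ^ 3 := by ring
      _ ≤ _ := by gcongr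
  · rw [div_le_div_iff₀ (by positivity) (by positivity)]
    have h3 : exp v ^ 3 = exp (v / 4) ^ 12 := by
      rw [h2, ← pow_mul]
    have h4 : exp v * (exp v ^ 2 + 4 * exp v + 1) ≤ 6 * exp v ^ 3 := by nlinarith
    calc exp v * (exp v ^ 2 + 4 * exp v + 1) * v ^ 4 ≤ 6 * exp v ^ 3 * v ^ 4 := by gcongr
      _ = 96 * (v / 2 * exp (v / 4) ^ 3) ^ 4 := by rw [h3]; ring
      _ ≤ _ := by gcongr

noncomputable def auxJ (a : ℕ) (v : ℝ) : ℝ := ∑ j ∈ Finset.Icc 1 a, exp v ^ j / j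

noncomputable def auxF (a : ℕ) (v : ℝ) : ℝ := (exp (a * v) - 1) * (exp v / (exp v - 1) / a +
  exp v / (exp v - 1) ^ 2 / a ^ 2 + exp v * (exp v + 1) / (exp v - 1) ^ 3 / a ^ 3)

lemma aux_geom (a : ℕ) (s : ℝ) (hs : s ≠ 1) :
    ∑ j ∈ Finset.Icc 1 a, s ^ j = (s ^ a - 1) * (s / (s - 1)) := by
  have : s - 1 ≠ 0 := sub_ne_zero.2 hs
  induction a with
  | zero => simp
  | succ k ih => rw [Finset.sum_Icc_succ_top (by omega), ih]; field_simp; ring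

lemma auxJ_deriv (a : ℕ) (v : ℝ) : HasDerivAt (auxJ a) (∑ j ∈ Finset.Icc 1 a, exp v ^ j) v := by
  have : HasDerivAt (auxJ a) (∑ j ∈ Finset.Icc 1 a, ((j : ℝ) * exp v ^ (j - 1) * exp v) / j) v :=
    HasDerivAt.fun_sum fun j _ => ((Real.hasDerivAt_exp v).fun_pow j).div_const _
  refine this.congr_deriv (Finset.sum_congr rfl fun j hj => ?_)
  have h1 := (Finset.mem_Icc.1 hj).1
  obtain ⟨k, rfl⟩ : ∃ k, j = k + 1 := ⟨j - 1, by omega⟩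
  rw [Nat.add_sub_cancel, pow_succ]
  field_simp

lemma auxF_deriv (a : ℕ) (ha : 1 ≤ a) (v : ℝ) (hv : 0 < v) : HasDerivAt (auxF a)
    (exp (a * v) * (exp v / (exp v - 1)) + exp v / (exp v - 1) ^ 2 / a
      + exp v * (exp v + 1) / (exp v - 1) ^ 3 / a ^ 2
      - (exp (a * v) - 1) * (exp v * (exp v ^ 2 + 4 * exp v + 1) / (exp v - 1) ^ 4) / a ^ 3) v := by
  have ha' : (a : ℝ) ≠ 0 := by positivity
  have h0 := Real.add_one_le_exp v
  have hs : exp v - 1 ≠ 0 := by linarith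
  have e := Real.hasDerivAt_exp v
  have e1 := e.sub_const 1
  have f0 := (e.fun_div e1 hs).div_const (a : ℝ)
  have f1 := (e.fun_div (e1.fun_pow 2) (pow_ne_zero 2 hs)).div_const ((a : ℝ) ^ 2)
  have f2 := ((e.fun_mul (e.add_const 1)).fun_div (e1.fun_pow 3) (pow_ne_zero 3 hs)).div_const
    ((a : ℝ) ^ 3)
  have g := (((hasDerivAt_id v).const_mul (a : ℝ)).exp).sub_const 1
  have := g.fun_mul ((f0.fun_add f1).fun_add f2)
  refine HasDerivAt.congr_deriv (f := auxF a) this ?_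
  simp only [id]
  generalize exp (a * v) = q
  generalize exp v = s at *
  push_cast
  field_simp
  ring

lemma aux_harm (a : ℕ) (ha : 1 ≤ a) : Real.log a ≤ ∑ j ∈ Finset.Icc 1 a, (1 : ℝ) / j ∧
    ∑ j ∈ Finset.Icc 1 a, (1 : ℝ) / j ≤ 1 + Real.log a := by
  have h : ((harmonic a : ℚ) : ℝ) = ∑ j ∈ Finset.Icc 1 a, (1 : ℝ) / j := by
    rw [harmonic_eq_sum_Icc]; push_cast; simp
  rw [← h]
  refine ⟨le_trans ?_ (log_add_one_le_harmonic a), harmonic_le_one_add_log a⟩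
  apply Real.log_le_log (by positivity)
  push_cast; linarith

lemma aux_base (a : ℕ) (ha : 1 ≤ a) : Real.log a - 2 * exp 8 ≤ auxJ a (8 / a) - auxF a (8 / a) ∧
    auxJ a (8 / a) - auxF a (8 / a) ≤ Real.log a + 1 + 8 * exp 8 := by
  have ha0 : (0 : ℝ) < a := by positivity
  have ha1 : (1 : ℝ) ≤ a := by exact_mod_cast ha
  obtain ⟨hl, hu⟩ := aux_harm a ha
  have hv : (0 : ℝ) < 8 / a := by positivity
  obtain ⟨b0, b1, b2, -⟩ := aux_B (8 / a) hv
  have hav : (a : ℝ) * (8 / a) = 8 := by field_simp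
  have h1 : (1 : ℝ) ≤ exp (8 / a) := Real.one_le_exp hv.le
  have h1' : 0 < exp (8 / (a : ℝ)) - 1 := by have := Real.add_one_le_exp (8 / (a : ℝ)); linarith
  have h8 : (1 : ℝ) ≤ exp 8 := Real.one_le_exp (by norm_num)
  have hJ1 : Real.log a ≤ auxJ a (8 / a) := by
    refine hl.trans (Finset.sum_le_sum fun j hj => ?_)
    gcongr
    exact one_le_pow₀ h1
  have hJ2 : auxJ a (8 / a) ≤ 1 + Real.log a + 8 * exp 8 := by
    have : auxJ a (8 / a) ≤ ∑ j ∈ Finset.Icc 1 a, ((1 : ℝ) / j + 8 * exp 8 / a) := by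
      refine Finset.sum_le_sum fun j hj => ?_
      have hj1 : (1 : ℝ) ≤ j := by exact_mod_cast (Finset.mem_Icc.1 hj).1
      have hj2 : (j : ℝ) ≤ a := by exact_mod_cast (Finset.mem_Icc.1 hj).2
      rw [← Real.exp_nat_mul]
      have hy : (j : ℝ) * (8 / a) ≤ 8 := by
        calc (j : ℝ) * (8 / a) ≤ a * (8 / a) := by gcongr
          _ = 8 := hav
      have e1 := Real.add_one_le_exp (-((j : ℝ) * (8 / a)))
      have e2 : exp ((j : ℝ) * (8 / a)) ≤ 1 + (j : ℝ) * (8 / a) * exp 8 := by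
        have e3 : exp ((j : ℝ) * (8 / a)) ≤ exp 8 := Real.exp_le_exp.2 hy
        rw [Real.exp_neg] at e1
        have hp := Real.exp_pos ((j : ℝ) * (8 / a))
        have : (-((j : ℝ) * (8 / a)) + 1) * exp ((j : ℝ) * (8 / a)) ≤ 1 := by
          rwa [← le_div_iff₀ hp, one_div]
        have : (j : ℝ) * (8 / a) * exp ((j : ℝ) * (8 / a)) ≤ (j : ℝ) * (8 / a) * exp 8 := by
          gcongr
        linarith
      calc exp ((j : ℝ) * (8 / a)) / j ≤ (1 + (j : ℝ) * (8 / a) * exp 8) / j := by gcongr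
        _ = _ := by field_simp
    rw [Finset.sum_add_distrib, Finset.sum_const] at this
    simp only [Nat.card_Icc, Nat.add_sub_cancel, nsmul_eq_mul] at this
    have h3 : (a : ℝ) * (8 * exp 8 / a) = 8 * exp 8 := by field_simp
    rw [h3] at this
    linarith
  have hF1 : 0 ≤ auxF a (8 / a) := by
    unfold auxF
    rw [hav]
    have : 0 ≤ exp 8 - 1 := by linarith
    positivity
  have hF2 : auxF a (8 / a) ≤ 2 * exp 8 := by
    unfold auxF
    rw [hav]
    have c0 : exp (8 / (a : ℝ)) / (exp (8 / (a : ℝ)) - 1) / a ≤ 9 / 8 := by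
      rw [div_le_iff₀ ha0]
      have : 1 + 1 / (8 / (a : ℝ)) = 1 + a / 8 := by field_simp
      linarith
    have c1 : exp (8 / (a : ℝ)) / (exp (8 / (a : ℝ)) - 1) ^ 2 / a ^ 2 ≤ 1 / 16 := by
      rw [div_le_iff₀ (by positivity)]
      have : 4 / (8 / (a : ℝ)) ^ 2 = 1 / 16 * a ^ 2 := by field_simp; norm_num
      linarith
    have c2 : exp (8 / (a : ℝ)) * (exp (8 / (a : ℝ)) + 1) / (exp (8 / (a : ℝ)) - 1) ^ 3 / a ^ 3
        ≤ 1 / 32 := by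
      rw [div_le_iff₀ (by positivity)]
      have : 16 / (8 / (a : ℝ)) ^ 3 = 1 / 32 * a ^ 3 := by field_simp; norm_num
      linarith
    calc _ ≤ (exp 8 - 1) * (2 : ℝ) := by
          apply mul_le_mul_of_nonneg_left _ (by linarith)
          linarith
      _ ≤ _ := by linarith
  constructor <;> linarith

lemma aux_main (a : ℕ) (ha : 1 ≤ a) (u : ℝ) (hu : 8 / (a : ℝ) ≤ u) :
    Real.log a - 2 * exp 8 - 3 * (a * u) ≤ auxJ a u - auxF a u ∧
    auxJ a u - auxF a u ≤ Real.log a + 1 + 8 * exp 8 + 192 * exp (a * u) / (a ^ 4 * u ^ 4) := by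
  have ha0 : (0 : ℝ) < a := by positivity
  have ha1 : (1 : ℝ) ≤ a := by exact_mod_cast ha
  have hv0 : (0 : ℝ) < 8 / a := by positivity
  obtain ⟨hb1, hb2⟩ := aux_base a ha
  have hmem0 : (8 / (a : ℝ)) ∈ Set.Ici (8 / (a : ℝ)) := Set.mem_Ici.2 le_rfl
  have hmem1 : u ∈ Set.Ici (8 / (a : ℝ)) := hu
  -- derivative of `J - F`
  have hD : ∀ v : ℝ, 0 < v → HasDerivAt (fun v => auxJ a v - auxF a v)
      ((exp (a * v) - 1) * (exp v * (exp v ^ 2 + 4 * exp v + 1) / (exp v - 1) ^ 4) / a ^ 3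
        - (exp v / (exp v - 1) + exp v / (exp v - 1) ^ 2 / a
      + exp v * (exp v + 1) / (exp v - 1) ^ 3 / a ^ 2)) v := by
    intro v hv
    refine ((auxJ_deriv a v).fun_sub (auxF_deriv a ha v hv)).congr_deriv ?_
    have h0 := Real.add_one_le_exp v
    rw [aux_geom a _ (by linarith), ← Real.exp_nat_mul]
    ring
  constructor
  · have hE : ∀ v : ℝ, 0 < v → HasDerivAt (fun v => auxJ a v - auxF a v + 3 * (a * v)) _ v :=
      fun v hv => (hD v hv).fun_add (((hasDerivAt_id v).const_mul (a : ℝ)).const_mul 3)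
    have hm : MonotoneOn (fun v => auxJ a v - auxF a v + 3 * (a * v)) (Set.Ici (8 / (a : ℝ))) := by
      apply monotoneOn_of_deriv_nonneg (convex_Ici _)
      · intro v hv
        exact (hE v (hv0.trans_le hv)).continuousAt.continuousWithinAt
      · intro v hv
        rw [interior_Ici] at hv
        exact (hE v (hv0.trans hv)).differentiableAt.differentiableWithinAt
      · intro v hv
        rw [interior_Ici] at hv
        have hv' : 8 / (a : ℝ) < v := hv
        have hvp := hv0.trans hv'
        rw [(hE v hvp).deriv]
        obtain ⟨b0, b1, b2, -⟩ := aux_B v hvp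
        have h0 := Real.add_one_le_exp v
        have h0' : 0 < exp v - 1 := by linarith
        have h3 : 0 ≤ exp (a * v) - 1 := by
          have := Real.one_le_exp (x := a * v) (by positivity); linarith
        have h4 : 0 ≤ (exp (a * v) - 1) *
          (exp v * (exp v ^ 2 + 4 * exp v + 1) / (exp v - 1) ^ 4) / a ^ 3 := by positivity
        have hav : 8 < v * a := by rwa [div_lt_iff₀ ha0] at hv'
        have hi : 1 / v ≤ a / 8 := by rw [div_le_div_iff₀ hvp (by norm_num)]; linarith
        have c0 : exp v / (exp v - 1) ≤ 2 * a := by linarith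
        have c1 : exp v / (exp v - 1) ^ 2 / a ≤ a / 16 := by
          rw [div_le_iff₀ ha0]
          calc _ ≤ _ := b1
            _ = 4 * (1 / v) ^ 2 := by ring
            _ ≤ 4 * (a / 8) ^ 2 := by gcongr
            _ = _ := by ring
        have c2 : exp v * (exp v + 1) / (exp v - 1) ^ 3 / a ^ 2 ≤ a / 32 := by
          rw [div_le_iff₀ (by positivity)]
          calc _ ≤ _ := b2
            _ = 16 * (1 / v) ^ 3 := by ring
            _ ≤ 16 * (a / 8) ^ 3 := by gcongr
            _ = _ := by ring
        linarith
    have := hm hmem0 hmem1 hu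
    simp only at this
    have : (0 : ℝ) ≤ 3 * (a * (8 / a)) := by positivity
    linarith
  · have hU : ∀ v : ℝ, 0 < v → HasDerivAt (fun v : ℝ => 192 * exp (a * v) / (a ^ 4 * v ^ 4))
        (192 * exp (a * v) / (a ^ 4 * v ^ 4) * (a - 4 / v)) v := by
      intro v hv
      have := (((hasDerivAt_id v).const_mul (a : ℝ)).exp.const_mul 192).fun_div
        ((hasDerivAt_pow 4 v).const_mul ((a : ℝ) ^ 4)) (by positivity)
      refine HasDerivAt.congr_deriv this ?_
      simp only [id]
      push_cast
      field_simp
    have hE : ∀ v : ℝ, 0 < v → HasDerivAt (fun v => auxJ a v - auxF a v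
        - 192 * exp (a * v) / (a ^ 4 * v ^ 4)) _ v :=
      fun v hv => (hD v hv).fun_sub (hU v hv)
    have hm : AntitoneOn (fun v => auxJ a v - auxF a v - 192 * exp (a * v) / (a ^ 4 * v ^ 4))
        (Set.Ici (8 / (a : ℝ))) := by
      apply antitoneOn_of_deriv_nonpos (convex_Ici _)
      · intro v hv
        exact (hE v (hv0.trans_le hv)).continuousAt.continuousWithinAt
      · intro v hv
        rw [interior_Ici] at hv
        exact (hE v (hv0.trans hv)).differentiableAt.differentiableWithinAt
      · intro v hv
        rw [interior_Ici] at hv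
        have hv' : 8 / (a : ℝ) < v := hv
        have hvp := hv0.trans hv'
        rw [(hE v hvp).deriv]
        obtain ⟨-, -, -, b3⟩ := aux_B v hvp
        have h0 := Real.add_one_le_exp v
        have h0' : 0 < exp v - 1 := by linarith
        have hav : 8 < v * a := by rwa [div_lt_iff₀ ha0] at hv'
        have hi : 4 / v ≤ a / 2 := by rw [div_le_div_iff₀ hvp (by norm_num)]; linarith
        have h5 : 0 ≤ exp v / (exp v - 1) + exp v / (exp v - 1) ^ 2 / a
          + exp v * (exp v + 1) / (exp v - 1) ^ 3 / a ^ 2 := by positivity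
        have h6 : (exp (a * v) - 1) * (exp v * (exp v ^ 2 + 4 * exp v + 1) / (exp v - 1) ^ 4) / a ^ 3
            ≤ exp (a * v) * (96 / v ^ 4) / a ^ 3 := by
          gcongr
          linarith
        have h7 : exp (a * v) * (96 / v ^ 4) / a ^ 3 =
            192 * exp (a * v) / (a ^ 4 * v ^ 4) * (a - a / 2) := by field_simp; norm_num
        have h8 : 192 * exp (a * v) / (a ^ 4 * v ^ 4) * (a - a / 2) ≤
            192 * exp (a * v) / (a ^ 4 * v ^ 4) * (a - 4 / v) := by
          apply mul_le_mul_of_nonneg_left _ (by positivity)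
          linarith
        linarith
    have := hm hmem0 hmem1 hu
    simp only at this
    have : 0 ≤ 192 * exp (a * (8 / a)) / (a ^ 4 * (8 / (a : ℝ)) ^ 4) := by positivity
    linarith

lemma aux_coth (u : ℝ) (hu : 0 < u) : 0 ≤ (exp u + 1) / (exp u - 1) - 2 / u ∧
    (exp u + 1) / (exp u - 1) - 2 / u ≤ u := by
  have hs : 0 < exp u - 1 := by have := Real.add_one_le_exp u; linarith
  have hP : MonotoneOn (fun v : ℝ => v * (exp v + 1) - 2 * (exp v - 1)) (Set.Ici 0) := by
    have hE : ∀ v : ℝ, HasDerivAt (fun v : ℝ => v * (exp v + 1) - 2 * (exp v - 1))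
        (1 * (exp v + 1) + v * exp v - 2 * exp v) v := fun v =>
      ((hasDerivAt_id v).fun_mul ((Real.hasDerivAt_exp v).add_const 1)).fun_sub
        (((Real.hasDerivAt_exp v).sub_const 1).const_mul 2)
    apply monotoneOn_of_deriv_nonneg (convex_Ici _)
    · exact fun v _ => (hE v).continuousAt.continuousWithinAt
    · exact fun v _ => (hE v).differentiableAt.differentiableWithinAt
    · intro v _
      rw [(hE v).deriv]
      have e1 := Real.add_one_le_exp (-v)
      rw [Real.exp_neg] at e1
      have : (-v + 1) * exp v ≤ 1 := by
        rwa [← le_div_iff₀ (Real.exp_pos v), one_div]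
      linarith
  have hQ : MonotoneOn (fun v : ℝ => 2 * (exp v - 1) + v ^ 2 * (exp v - 1) - v * (exp v + 1))
      (Set.Ici 0) := by
    have hE : ∀ v : ℝ, HasDerivAt
        (fun v : ℝ => 2 * (exp v - 1) + v ^ 2 * (exp v - 1) - v * (exp v + 1))
        (2 * exp v + ((2 : ℕ) * v ^ (2 - 1) * (exp v - 1) + v ^ 2 * exp v)
          - (1 * (exp v + 1) + v * exp v)) v := fun v =>
      ((((Real.hasDerivAt_exp v).sub_const 1).const_mul 2).fun_add
        ((hasDerivAt_pow 2 v).fun_mul ((Real.hasDerivAt_exp v).sub_const 1))).fun_sub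
      ((hasDerivAt_id v).fun_mul ((Real.hasDerivAt_exp v).add_const 1))
    apply monotoneOn_of_deriv_nonneg (convex_Ici _)
    · exact fun v _ => (hE v).continuousAt.continuousWithinAt
    · exact fun v _ => (hE v).differentiableAt.differentiableWithinAt
    · intro v hv
      rw [interior_Ici] at hv
      have hv' : 0 < v := hv
      rw [(hE v).deriv]
      have e1 := Real.add_one_le_exp v
      have e2 : 0 ≤ v ^ 2 * exp v := by positivity
      have e3 : 0 ≤ v * (exp v - 1) := mul_nonneg hv'.le (by linarith)
      norm_num
      nlinarith
  have p := hP (Set.mem_Ici.2 le_rfl) (Set.mem_Ici.2 hu.le) hu.le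
  have q := hQ (Set.mem_Ici.2 le_rfl) (Set.mem_Ici.2 hu.le) hu.le
  simp only [exp_zero] at p q
  norm_num at p q
  constructor
  · rw [sub_nonneg, div_le_div_iff₀ hu hs]; linarith
  · rw [sub_le_iff_le_add]
    have : u + 2 / u = (u ^ 2 + 2) / u := by field_simp
    rw [this, div_le_div_iff₀ hs hu]
    linarith

lemma aux_final : ∃ C : ℝ, 0 ≤ C ∧ ∀ (a : ℕ) (u N d : ℝ), 2 ≤ a → 0 < u → 8 ≤ a * u →
    N = (exp (a * u) - 1) * (exp u / (exp u - 1)) → |d - auxJ a u| ≤ 1 / 2 →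
    0 ≤ N / ((a : ℝ) ^ 4 * u ^ 2 * (exp u - 1)) ∧
    -(C * (N / ((a : ℝ) ^ 4 * u ^ 2 * (exp u - 1)))) ≤
      d - (Real.log a + N / a + N / ((a : ℝ) ^ 2 * (exp u - 1))
        + 2 * N / ((a : ℝ) ^ 3 * (exp u - 1) * u)) ∧
      d - (Real.log a + N / a + N / ((a : ℝ) ^ 2 * (exp u - 1))
        + 2 * N / ((a : ℝ) ^ 3 * (exp u - 1) * u)) ≤
      C * (N / ((a : ℝ) ^ 4 * u ^ 2 * (exp u - 1))) + C * (exp (a * u) / ((a : ℝ) ^ 3 * u)) := by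
  refine ⟨7680 * (8 * exp 8 + 4) + 1152, by positivity, ?_⟩
  intro a u N d ha hu hL hN hd
  have ha2 : (2 : ℝ) ≤ a := by exact_mod_cast ha
  have ha0 : (0 : ℝ) < a := by linarith
  have hs : 0 < exp u - 1 := by have := Real.add_one_le_exp u; linarith
  have hx : 0 < exp u := Real.exp_pos u
  have hq2 : 2 ≤ exp (a * u) := by have := Real.add_one_le_exp (a * u); linarith
  have hN0 : 0 < N := by
    rw [hN]
    have : 0 < exp (a * u) - 1 := by linarith
    positivity
  obtain ⟨m1, m2⟩ := aux_main a (by omega) u (by rw [div_le_iff₀ ha0]; linarith)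
  obtain ⟨k1, k2⟩ := aux_coth u hu
  have hFT : auxF a u = N / a + N / ((a : ℝ) ^ 2 * (exp u - 1))
        + 2 * N / ((a : ℝ) ^ 3 * (exp u - 1) * u)
        + N / (exp u - 1) / a ^ 3 * ((exp u + 1) / (exp u - 1) - 2 / u) := by
    rw [hN, auxF]
    field_simp
    ring
  have hK0 : 0 ≤ N / (exp u - 1) / a ^ 3 * ((exp u + 1) / (exp u - 1) - 2 / u) := by positivity
  have hNx : N / (exp u - 1) ≤ exp (a * u) / u ^ 2 := by
    have h1 := aux_exp_half u hu.le
    have h2 : N / (exp u - 1) = (exp (a * u) - 1) * (exp u / (exp u - 1) ^ 2) := by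
      rw [hN]; field_simp
    have h3 : exp u / (exp u - 1) ^ 2 ≤ 1 / u ^ 2 := by
      rw [div_le_div_iff₀ (by positivity) (by positivity)]; linarith
    rw [h2]
    calc _ ≤ exp (a * u) * (1 / u ^ 2) := by gcongr; linarith
      _ = _ := by ring
  have hK1 : N / (exp u - 1) / a ^ 3 * ((exp u + 1) / (exp u - 1) - 2 / u) ≤
      exp (a * u) / ((a : ℝ) ^ 3 * u) := by
    calc _ ≤ exp (a * u) / u ^ 2 / a ^ 3 * u := by gcongr
      _ = _ := by field_simp
  set E := N / ((a : ℝ) ^ 4 * u ^ 2 * (exp u - 1)) with hE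
  set Q := exp (a * u) / ((a : ℝ) ^ 3 * u) with hQ
  have hE0 : 0 ≤ E := by positivity
  have hQ0 : 0 ≤ Q := by positivity
  have hElow : exp (a * u) / (2 * (a * u) ^ 4 * exp u) ≤ E := by
    have h1 : exp u - 1 ≤ u * exp u := by
      have e1 := Real.add_one_le_exp (-u)
      rw [Real.exp_neg] at e1
      have : (-u + 1) * exp u ≤ 1 := by
        rwa [← le_div_iff₀ (Real.exp_pos u), one_div]
      linarith
    have h2 : E = (exp (a * u) - 1) * exp u / (a ^ 4 * u ^ 2 * (exp u - 1) ^ 2) := by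
      rw [hE, hN]; field_simp
    rw [h2]
    calc exp (a * u) / (2 * (a * u) ^ 4 * exp u)
        = (exp (a * u) / 2) * exp u / (a ^ 4 * u ^ 2 * (u * exp u) ^ 2) := by field_simp
      _ ≤ _ := by
        have hq1 : exp (a * u) / 2 ≤ exp (a * u) - 1 := by linarith
        have hq0 : 0 ≤ exp (a * u) - 1 := by linarith
        gcongr
  have hEL : a * u ≤ 7680 * E := by
    have h1 : exp u ≤ exp (a * u / 2) := Real.exp_le_exp.2 (by nlinarith)
    have h2 : exp (a * u) = exp (a * u / 2) ^ 2 := by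
      rw [← Real.exp_nat_mul]; congr 1; push_cast; ring
    have h3 := Real.pow_div_factorial_le_exp (a * u / 2) (by positivity) 5
    have h4 : ((Nat.factorial 5 : ℕ) : ℝ) = 120 := by norm_num [Nat.factorial]
    rw [h4] at h3
    have h5 : (a * u / 2) ^ 5 / 120 / (2 * (a * u) ^ 4) ≤ E := by
      calc (a * u / 2) ^ 5 / 120 / (2 * (a * u) ^ 4) ≤ exp (a * u / 2) / (2 * (a * u) ^ 4) := by
            gcongr
        _ = exp (a * u) / (2 * (a * u) ^ 4 * exp (a * u / 2)) := by
            rw [h2]; field_simp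
        _ ≤ exp (a * u) / (2 * (a * u) ^ 4 * exp u) := by gcongr
        _ ≤ E := hElow
    have h6 : (a * u / 2) ^ 5 / 120 / (2 * (a * u) ^ 4) = a * u / 7680 := by
      field_simp; norm_num
    linarith
  have hU : 192 * exp (a * u) / (a ^ 4 * u ^ 4) ≤ 1152 * E + 192 * Q := by
    rcases le_total u 1 with h | h
    · have h1 : exp u ≤ 3 := by
        have := Real.exp_le_exp.2 h
        have := Real.exp_one_lt_d9
        linarith
      have h2 : exp (a * u) / (2 * (a * u) ^ 4 * 3) ≤ E :=
        le_trans (by gcongr) hElow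
      have h3 : 192 * exp (a * u) / (a ^ 4 * u ^ 4) = 1152 * (exp (a * u) / (2 * (a * u) ^ 4 * 3)) := by
        field_simp; norm_num
      rw [h3]; linarith
    · have h1 : (a : ℝ) ^ 3 * u ≤ a ^ 4 * u ^ 4 := by
        have h2 : (a : ℝ) ^ 3 ≤ a ^ 4 := pow_le_pow_right₀ (by linarith) (by norm_num)
        have h3 : u ^ 1 ≤ u ^ 4 := pow_le_pow_right₀ h (by norm_num)
        rw [pow_one] at h3
        gcongr
      have h2 : 192 * exp (a * u) / (a ^ 4 * u ^ 4) ≤ 192 * Q := by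
        rw [hQ, ← mul_div_assoc]
        gcongr
      linarith
  have h8 : 0 < exp 8 := Real.exp_pos 8
  have hbig : (8 * exp 8 + 4) * 1 ≤ (8 * exp 8 + 4) * (a * u) := by gcongr; linarith
  have hbig2 : (8 * exp 8 + 4) * (a * u) ≤ (8 * exp 8 + 4) * (7680 * E) := by gcongr
  have hbig3 : exp 8 * 1 ≤ exp 8 * (a * u) := by gcongr; linarith
  have hm : 0 ≤ exp 8 * (a * u) := by positivity
  have hm2 : 0 ≤ exp 8 * Q := by positivity
  obtain ⟨d1, d2⟩ := abs_le.1 hd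
  refine ⟨hE0, ?_, ?_⟩
  · nlinarith
  · nlinarith

lemma aux_integral (a : ℕ) (u : ℝ) (hu : 0 < u) :
    ∫ v in (0 : ℝ)..u, (exp (a * v) - 1) * exp v / (exp v - 1) = auxJ a u - auxJ a 0 := by
  have h1 : ∫ v in (0 : ℝ)..u, (exp (a * v) - 1) * exp v / (exp v - 1) =
      ∫ v in (0 : ℝ)..u, ∑ j ∈ Finset.Icc 1 a, exp v ^ j := by
    apply intervalIntegral.integral_congr_ae
    filter_upwards with v hv
    rw [Set.uIoc_of_le hu.le] at hv
    have h0 := Real.add_one_le_exp v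
    have := hv.1
    rw [aux_geom a _ (by linarith), ← Real.exp_nat_mul]
    ring
  rw [h1]
  apply intervalIntegral.integral_eq_sub_of_hasDerivAt
  · exact fun v _ => auxJ_deriv a v
  · apply Continuous.intervalIntegrable
    fun_prop

end

open Filter Real Asymptotics in
/-- asymptotics of `h̃'_{n,α}(1)`.  Assume `α(n)/n → 0` and
`α(n) ≥ 2` for all large `n`.  Here `x n w = x_{n,α}(w)` is the positive solution
of `∑_{j=1}^{α(n)} x^j = n/w`,
`h̃ n w = w ∑_{j=1}^{α(n)} x(w)^j/j − n log x(w) − (1/2) log(2πw ∑ j x(w)^j)`,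
and we write `x = x n 1`, `a = α n`.  Then:
(i) `h̃'(1) = log a + ∫_0^{log x} (e^{a v} − 1) e^v/(e^v − 1) dv + O(1)`;
(ii) there is a nonnegative `p : ℕ → ℝ` with `p(n) = O(x^a/(a³ log x))` such that
`h̃'(1) = log a + n/a + n/(a²(x−1)) + 2n/(a³(x−1) log x) + p(n)
          + O(n/(a⁴ (log x)² (x−1)))`. -/
theorem stmt_16 (α : ℕ → ℕ) (hα : ∀ n, 1 ≤ α n)
    (hαn : Tendsto (fun n : ℕ => (α n : ℝ) / n) atTop (nhds 0))
    (hα2 : ∀ᶠ n : ℕ in atTop, 2 ≤ α n)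
    (x : ℕ → ℝ → ℝ)
    (hx : ∀ n, 1 ≤ n → ∀ w : ℝ, 0 < w →
      0 < x n w ∧ ∑ j ∈ Finset.Icc 1 (α n), x n w ^ j = (n : ℝ) / w)
    (h : ℕ → ℝ → ℝ)
    (hh : ∀ n, ∀ w : ℝ, 0 < w →
      h n w = w * ∑ j ∈ Finset.Icc 1 (α n), x n w ^ j / j - (n : ℝ) * Real.log (x n w)
        - 1 / 2 * Real.log (2 * π * w * ∑ j ∈ Finset.Icc 1 (α n), (j : ℝ) * x n w ^ j)) :
    ((fun n : ℕ => deriv (h n) 1 -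
        (Real.log (α n) + ∫ v in (0 : ℝ)..Real.log (x n 1),
          (Real.exp (α n * v) - 1) * Real.exp v / (Real.exp v - 1)))
      =O[atTop] fun _ : ℕ => (1 : ℝ)) ∧
    ∃ p : ℕ → ℝ, (∀ n, 0 ≤ p n) ∧
      ((fun n : ℕ => p n)
        =O[atTop] fun n : ℕ =>
          x n 1 ^ α n / ((α n : ℝ) ^ 3 * Real.log (x n 1))) ∧
      ((fun n : ℕ => deriv (h n) 1 -
          (Real.log (α n) + (n : ℝ) / α n
            + (n : ℝ) / ((α n : ℝ) ^ 2 * (x n 1 - 1))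
            + 2 * (n : ℝ) / ((α n : ℝ) ^ 3 * (x n 1 - 1) * Real.log (x n 1))
            + p n))
        =O[atTop] fun n : ℕ =>
          (n : ℝ) / ((α n : ℝ) ^ 4 * Real.log (x n 1) ^ 2 * (x n 1 - 1))) := by
  obtain ⟨C, hC0, hC⟩ := aux_final
  -- eventual facts
  have hev : ∀ᶠ n : ℕ in atTop, 2 ≤ α n ∧ 1 < x n 1 ∧ 8 ≤ α n * Real.log (x n 1) ∧
      (n : ℝ) = (exp (α n * Real.log (x n 1)) - 1) * (x n 1 / (x n 1 - 1)) ∧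
      |deriv (h n) 1 - auxJ (α n) (Real.log (x n 1))| ≤ 1 / 2 := by
    have h1 : ∀ᶠ n : ℕ in atTop, (α n : ℝ) / n < exp (-8) :=
      hαn.eventually_lt_const (Real.exp_pos _)
    filter_upwards [h1, hα2, eventually_ge_atTop 1] with n hn1 hn2 hn3
    obtain ⟨hx0, hx1⟩ := hx n hn3 1 one_pos
    have hn0 : (0 : ℝ) < n := by exact_mod_cast hn3
    have ha0 : (0 : ℝ) < α n := by exact_mod_cast (by omega : 0 < α n)
    rw [div_one] at hx1
    rw [div_lt_iff₀ hn0, Real.exp_neg, inv_mul_eq_div, lt_div_iff₀ (Real.exp_pos 8)] at hn1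
    have he8 : 1 < exp 8 := Real.one_lt_exp_iff.2 (by norm_num)
    have hgt : 1 < x n 1 := by
      by_contra hle
      have : ∑ j ∈ Finset.Icc 1 (α n), x n 1 ^ j ≤ ∑ j ∈ Finset.Icc 1 (α n), (1 : ℝ) :=
        Finset.sum_le_sum fun j _ => pow_le_one₀ hx0.le (not_lt.1 hle)
      simp only [Finset.sum_const, Nat.card_Icc, Nat.add_sub_cancel, nsmul_eq_mul, mul_one] at this
      nlinarith
    have hpow : exp 8 < x n 1 ^ α n := by
      have : ∑ j ∈ Finset.Icc 1 (α n), x n 1 ^ j ≤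
          ∑ j ∈ Finset.Icc 1 (α n), x n 1 ^ α n :=
        Finset.sum_le_sum fun j hj => pow_le_pow_right₀ hgt.le (Finset.mem_Icc.1 hj).2
      simp only [Finset.sum_const, Nat.card_Icc, Nat.add_sub_cancel, nsmul_eq_mul] at this
      exact lt_of_mul_lt_mul_left (by linarith) ha0.le
    have hq : exp (α n * Real.log (x n 1)) = x n 1 ^ α n := by
      rw [Real.exp_nat_mul, Real.exp_log hx0]
    refine ⟨hn2, hgt, ?_, ?_, ?_⟩
    · rw [← hq] at hpow
      exact (Real.exp_lt_exp.1 hpow).le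
    · rw [hq, ← hx1, aux_geom _ _ hgt.ne']
    · rw [aux_deriv (α n) (hα n) n hn0 (x n) (h n) (hx n hn3) (hh n), auxJ, Real.exp_log hx0]
      obtain ⟨r1, r2⟩ := aux_ratio (α n) (hα n) (x n 1) hgt.le
      rw [abs_le]
      constructor <;> linarith
  constructor
  · rw [isBigO_iff]
    refine ⟨3 / 2, ?_⟩
    filter_upwards [hev] with n hn
    obtain ⟨h2, hgt, h8, hN, hd⟩ := hn
    rw [aux_integral (α n) _ (Real.log_pos hgt)]
    obtain ⟨l1, l2⟩ := aux_harm (α n) (hα n)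
    have hJ0 : auxJ (α n) 0 = ∑ j ∈ Finset.Icc 1 (α n), (1 : ℝ) / j := by simp [auxJ]
    rw [hJ0, Real.norm_eq_abs, norm_one, abs_le]
    obtain ⟨d1, d2⟩ := abs_le.1 hd
    constructor <;> linarith
  · refine ⟨fun n => max 0 (deriv (h n) 1 -
          (Real.log (α n) + (n : ℝ) / α n
            + (n : ℝ) / ((α n : ℝ) ^ 2 * (x n 1 - 1))
            + 2 * (n : ℝ) / ((α n : ℝ) ^ 3 * (x n 1 - 1) * Real.log (x n 1)))
          - C * ((n : ℝ) / ((α n : ℝ) ^ 4 * Real.log (x n 1) ^ 2 * (x n 1 - 1)))),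
      fun n => le_max_left _ _, ?_, ?_⟩
    all_goals
      rw [isBigO_iff]
      refine ⟨C, ?_⟩
      filter_upwards [hev] with n hn
      obtain ⟨h2, hgt, h8, hN, hd⟩ := hn
      have hx0 : 0 < x n 1 := by linarith
      have key := hC (α n) (Real.log (x n 1)) n (deriv (h n) 1) h2 (Real.log_pos hgt) h8
        (by rw [Real.exp_log hx0]; exact hN) hd
      rw [Real.exp_nat_mul, Real.exp_log hx0] at key
      obtain ⟨k0, k1, k2⟩ := key
      have hlog := Real.log_pos hgt
      have hQ : 0 ≤ x n 1 ^ α n / ((α n : ℝ) ^ 3 * Real.log (x n 1)) := by positivity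
      have hCQ := mul_nonneg hC0 hQ
      have hCE := mul_nonneg hC0 k0
    · rw [Real.norm_eq_abs, Real.norm_eq_abs, abs_of_nonneg (le_max_left _ _), abs_of_nonneg hQ]
      apply max_le hCQ
      linarith
    · rw [Real.norm_eq_abs, Real.norm_eq_abs, abs_of_nonneg k0, abs_le]
      rcases max_cases (0 : ℝ) (deriv (h n) 1 -
          (Real.log (α n) + (n : ℝ) / α n
            + (n : ℝ) / ((α n : ℝ) ^ 2 * (x n 1 - 1))
            + 2 * (n : ℝ) / ((α n : ℝ) ^ 3 * (x n 1 - 1) * Real.log (x n 1)))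
          - C * ((n : ℝ) / ((α n : ℝ) ^ 4 * Real.log (x n 1) ^ 2 * (x n 1 - 1)))) with hm | hm
      all_goals
        rw [hm.1]
        constructor <;> linarith
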